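/- Let L be an odd unimodular lattice in dimension 36 having minimum norm at least 3. Then there exist nonnegative integers α and β such that: the number of vectors of L of norm 3 equals 960 − α, the number of vectors of L of norm 4 equals 42840 + 4096β, the number of vectors of the shadow S(L) of norm 1 equals β, and the number of vectors of S(L) of norm 3 equals α − 60β. -/

import Mathlib

open scoped RealInnerProductSpace

noncomputable section

/-- The norm `(x, x)` of a vector `x ∈ ℝⁿ` (squared Euclidean length). -/
def normOf {n : ℕ} (x : EuclideanSpace ℝ (Fin n)) : ℝ := ⟪x, x⟫

/-- The dual `L* = {x ∈ ℝⁿ : (x,y) ∈ ℤ for all y ∈ L}` of a set of vectors. -/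
def dualSet {n : ℕ} (L : Set (EuclideanSpace ℝ (Fin n))) : Set (EuclideanSpace ℝ (Fin n)) :=
  {x | ∀ y ∈ L, ∃ m : ℤ, ⟪x, y⟫ = (m : ℝ)}

/-- `L` is a unimodular lattice: `L = L*`. -/
def IsUnimodularLattice {n : ℕ} (L : Set (EuclideanSpace ℝ (Fin n))) : Prop :=
  L = dualSet L

/-- `L` is odd: some vector of `L` has odd (integral) norm. -/
def IsOddLattice {n : ℕ} (L : Set (EuclideanSpace ℝ (Fin n))) : Prop :=
  ∃ x ∈ L, ∃ m : ℤ, Odd m ∧ normOf x = (m : ℝ)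

/-- The even sublattice `L₀ = {x ∈ L : (x,x) even}`. -/
def evenSublattice {n : ℕ} (L : Set (EuclideanSpace ℝ (Fin n))) :
    Set (EuclideanSpace ℝ (Fin n)) :=
  {x | x ∈ L ∧ ∃ m : ℤ, normOf x = 2 * (m : ℝ)}

/-- The shadow `S(L) = L₀* \ L`. -/
def shadow {n : ℕ} (L : Set (EuclideanSpace ℝ (Fin n))) : Set (EuclideanSpace ℝ (Fin n)) :=
  dualSet (evenSublattice L) \ L

/-- `L` has minimum norm `r`: `r` is the least norm among nonzero vectors of `L`. -/
def HasMinNorm {n : ℕ} (L : Set (EuclideanSpace ℝ (Fin n))) (r : ℝ) : Prop :=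
  IsLeast {s : ℝ | ∃ x ∈ L, x ≠ 0 ∧ normOf x = s} r

/-- The shadow `S(L)` has minimum norm `r`. -/
def HasShadowMinNorm {n : ℕ} (L : Set (EuclideanSpace ℝ (Fin n))) (r : ℝ) : Prop :=
  IsLeast {s : ℝ | ∃ x ∈ shadow L, normOf x = s} r

/-- `σ(L) = r`, i.e. `4 · min(S(L)) = r`. -/
def HasSigma {n : ℕ} (L : Set (EuclideanSpace ℝ (Fin n))) (r : ℝ) : Prop :=
  ∃ s : ℝ, HasShadowMinNorm L s ∧ r = 4 * s

/-- The number of vectors of norm `r` in `L`; when `L` has minimum norm `r`,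
this is the kissing number of `L`. -/
def numVecsOfNorm {n : ℕ} (L : Set (EuclideanSpace ℝ (Fin n))) (r : ℝ) : ℕ :=
  Set.ncard {x ∈ L | normOf x = r}

/-!
For a self-dual lattice `Λ` of rank `n ≡ 4 (mod 8)`, the theta series `θ_Λ(τ)`, its translate
`θ_Λ(τ + 1)` and the theta series of the shadow are permuted by `SL₂(ℤ)` up to signs and
automorphy factors that depend only on `n`. The sum of the products of corresponding functions of
two lattices is therefore a modular form of level one, of weight half the sum of the ranks. For `L`
of rank `36`, the partner `ℤ⁴` gives weight `20`, and a triple of quadratic expressions in the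
theta series of `ℤ⁴` that transforms in the same way gives weight `22`. In both weights the space
of modular forms has dimension two, so the coefficient of `q²` is a fixed linear combination of
those of `1` and `q`. The two resulting linear relations between the numbers of short vectors of
`L` and of its shadow are the theorem.
-/

section LevelOne

open UpperHalfPlane ModularForm ModularFormClass MatrixGroups EisensteinSeries

lemma levelOne_ext_of_coeff {k : ℕ} {F G : ModularForm 𝒮ℒ (k : ℤ)}
    (h : ∀ i ≤ k / 12, (qExpansion 1 F).coeff i = (qExpansion 1 G).coeff i) : F = G := by
  refine sub_eq_zero.mp (sturm_bound_levelOne_nat ?_)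
  refine lt_of_lt_of_le (Nat.cast_lt.mpr (Nat.lt_succ_self (k / 12))) ?_
  refine PowerSeries.nat_le_order _ _ fun i hi => ?_
  rw [FunLike.coe_sub, ModularForm.qExpansion_sub one_pos one_mem_strictPeriods_SL, map_sub,
    h i (Nat.lt_succ_iff.mp hi), sub_self]

lemma qExpansion_coeff_linearCombination {k : ℕ} (F G : ModularForm 𝒮ℒ (k : ℤ)) (a b : ℂ) (i : ℕ) :
    (qExpansion 1 ⇑(a • F + b • G)).coeff i =
      a * (qExpansion 1 F).coeff i + b * (qExpansion 1 G).coeff i := by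
  have hadd := ModularForm.qExpansion_add one_pos one_mem_strictPeriods_SL (a • F) (b • G)
  simp only [FunLike.coe_add, FunLike.coe_smul] at hadd ⊢
  rw [hadd, ModularForm.qExpansion_smul one_pos one_mem_strictPeriods_SL,
    ModularForm.qExpansion_smul one_pos one_mem_strictPeriods_SL]
  rfl

lemma coeff_two_eq_of_basis {k : ℕ} (hk : k / 12 = 1) {F₁ F₂ : ModularForm 𝒮ℒ (k : ℤ)} {r s : ℂ}
    (hdet : (qExpansion 1 F₁).coeff 0 * (qExpansion 1 F₂).coeff 1 ≠
      (qExpansion 1 F₁).coeff 1 * (qExpansion 1 F₂).coeff 0)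
    (h₁ : (qExpansion 1 F₁).coeff 2 = r * (qExpansion 1 F₁).coeff 1 + s * (qExpansion 1 F₁).coeff 0)
    (h₂ : (qExpansion 1 F₂).coeff 2 = r * (qExpansion 1 F₂).coeff 1 + s * (qExpansion 1 F₂).coeff 0)
    (G : ModularForm 𝒮ℒ (k : ℤ)) :
    (qExpansion 1 G).coeff 2 = r * (qExpansion 1 G).coeff 1 + s * (qExpansion 1 G).coeff 0 := by
  set c := fun i => (qExpansion 1 F₁).coeff i
  set c' := fun i => (qExpansion 1 F₂).coeff i
  set g := fun i => (qExpansion 1 G).coeff i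
  obtain ⟨d, hd⟩ : ∃ d, (c 0 * c' 1 - c 1 * c' 0) * d = 1 :=
    ⟨_, mul_inv_cancel₀ (sub_ne_zero.mpr hdet)⟩
  have hG : G = ((g 0 * c' 1 - g 1 * c' 0) * d) • F₁ + ((g 1 * c 0 - g 0 * c 1) * d) • F₂ := by
    refine levelOne_ext_of_coeff fun i hi => ?_
    rw [hk] at hi
    rw [qExpansion_coeff_linearCombination]
    change g i = _ * c i + _ * c' i
    interval_cases i
    · linear_combination -g 0 * hd
    · linear_combination -g 1 * hd
  have hcoeff (i : ℕ) := congrArg (fun F : ModularForm 𝒮ℒ (k : ℤ) => (qExpansion 1 F).coeff i) hG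
  simp only [qExpansion_coeff_linearCombination] at hcoeff
  rw [hcoeff 2, hcoeff 1, hcoeff 0, h₁, h₂]
  ring

lemma E₄_qExpansion_coeff_zero : (qExpansion 1 E₄).coeff 0 = 1 :=
  E_qExpansion_coeff_zero _ ⟨2, rfl⟩

lemma E₆_qExpansion_coeff_zero : (qExpansion 1 E₆).coeff 0 = 1 :=
  E_qExpansion_coeff_zero _ ⟨3, rfl⟩

lemma E₄_qExpansion_coeff_two : (qExpansion 1 E₄).coeff 2 = 2160 := by
  have hB : bernoulli 4 = -1 / 30 := by decide +kernel
  have hσ : ArithmeticFunction.sigma 3 2 = 9 := by decide +kernel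
  norm_num [E_qExpansion_coeff _ ⟨2, rfl⟩, hB, hσ]

lemma E₆_qExpansion_coeff_two : (qExpansion 1 E₆).coeff 2 = -16632 := by
  have hB : bernoulli 6 = 1 / 42 := by decide +kernel
  have hσ : ArithmeticFunction.sigma 5 2 = 33 := by decide +kernel
  norm_num [E_qExpansion_coeff _ ⟨3, rfl⟩, hB, hσ]

lemma qExpansion_coeff_two_weight_twenty (G : ModularForm 𝒮ℒ (20 : ℕ)) :
    (qExpansion 1 G).coeff 2 =
      456 * (qExpansion 1 G).coeff 1 + 39600 * (qExpansion 1 G).coeff 0 := by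
  refine coeff_two_eq_of_basis (by norm_num) (F₁ := (E₄.pow 5).mcast (by norm_num))
    (F₂ := ((E₄.pow 2).mul (E₆.pow 2)).mcast (by norm_num)) ?_ ?_ ?_ G <;>
  simp only [coe_mcast, ModularForm.qExpansion_mul one_pos one_mem_strictPeriods_SL,
    ModularForm.qExpansion_pow one_pos one_mem_strictPeriods_SL] <;>
  norm_num [pow_succ, PowerSeries.coeff_mul, Finset.Nat.antidiagonal_succ,
    E₄_qExpansion_coeff_zero, E₄_qExpansion_coeff_one, E₄_qExpansion_coeff_two,
    E₆_qExpansion_coeff_zero, E₆_qExpansion_coeff_one, E₆_qExpansion_coeff_two,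
    -PowerSeries.coeff_zero_eq_constantCoeff]

lemma qExpansion_coeff_two_weight_twentyTwo (G : ModularForm 𝒮ℒ (22 : ℕ)) :
    (qExpansion 1 G).coeff 2 =
      -288 * (qExpansion 1 G).coeff 1 - 14904 * (qExpansion 1 G).coeff 0 := by
  rw [sub_eq_add_neg, ← neg_mul]
  refine coeff_two_eq_of_basis (by norm_num) (F₁ := ((E₄.pow 4).mul E₆).mcast (by norm_num))
    (F₂ := (E₄.mul (E₆.pow 3)).mcast (by norm_num)) ?_ ?_ ?_ G <;>
  simp only [coe_mcast, ModularForm.qExpansion_mul one_pos one_mem_strictPeriods_SL,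
    ModularForm.qExpansion_pow one_pos one_mem_strictPeriods_SL] <;>
  norm_num [pow_succ, PowerSeries.coeff_mul, Finset.Nat.antidiagonal_succ,
    E₄_qExpansion_coeff_zero, E₄_qExpansion_coeff_one, E₄_qExpansion_coeff_two,
    E₆_qExpansion_coeff_zero, E₆_qExpansion_coeff_one, E₆_qExpansion_coeff_two,
    -PowerSeries.coeff_zero_eq_constantCoeff]

end LevelOne

section NomeExpansion

open scoped Manifold
open UpperHalfPlane ModularForm ModularFormClass MatrixGroups Function.Periodic

/-- `HasNomeExpansion f p` says that `f τ = ∑ pₙ e^{πinτ}` on the upper half plane: `p` is the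
expansion of `f` in the nome `e^{πiτ} = qParam 2 τ`, a square root of the usual `q`. -/
def HasNomeExpansion (f : ℍ → ℂ) (p : PowerSeries ℂ) : Prop :=
  ∀ τ : ℍ, HasSum (fun n => p.coeff n * qParam 2 τ ^ n) (f τ)

lemma qParam_two_vadd_one (τ : ℍ) : qParam 2 ((1 : ℝ) +ᵥ τ : ℍ) = -qParam 2 τ := by
  rw [coe_vadd, qParam, qParam, ← mul_neg_one, ← Complex.exp_pi_mul_I, ← Complex.exp_add]
  congr 1
  push_cast
  ring

lemma qParam_two_sq (τ : ℂ) : qParam 2 τ ^ 2 = qParam 1 τ := by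
  rw [qParam, qParam, ← Complex.exp_nat_mul]
  congr 1
  push_cast
  ring

namespace HasNomeExpansion

variable {f g : ℍ → ℂ} {p r : PowerSeries ℂ}

lemma add (hf : HasNomeExpansion f p) (hg : HasNomeExpansion g r) :
    HasNomeExpansion (f + g) (p + r) := fun τ => by
  simpa only [map_add, add_mul, Pi.add_apply] using (hf τ).add (hg τ)

lemma neg (hf : HasNomeExpansion f p) : HasNomeExpansion (-f) (-p) := fun τ => by
  simpa only [map_neg, neg_mul, Pi.neg_apply] using (hf τ).neg

lemma sub (hf : HasNomeExpansion f p) (hg : HasNomeExpansion g r) :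
    HasNomeExpansion (f - g) (p - r) := by
  simpa only [sub_eq_add_neg] using hf.add hg.neg

lemma mul (hf : HasNomeExpansion f p) (hg : HasNomeExpansion g r) :
    HasNomeExpansion (f * g) (p * r) := fun τ => by
  have hf' := (hf τ).summable.norm
  have hg' := (hg τ).summable.norm
  have hprod := (summable_norm_sum_mul_antidiagonal_of_summable_norm hf' hg').of_norm.hasSum
  rw [← tsum_mul_tsum_eq_tsum_sum_antidiagonal_of_summable_norm hf' hg', (hf τ).tsum_eq,
    (hg τ).tsum_eq] at hprod
  refine hprod.congr_fun fun n => ?_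
  rw [PowerSeries.coeff_mul, Finset.sum_mul]
  refine Finset.sum_congr rfl fun ij hij => ?_
  rw [← Finset.HasAntidiagonal.mem_antidiagonal.mp hij, pow_add]
  ring

lemma comp_vadd_one (hf : HasNomeExpansion f p) :
    HasNomeExpansion (fun τ => f ((1 : ℝ) +ᵥ τ)) (PowerSeries.rescale (-1) p) := fun τ => by
  refine (hf ((1 : ℝ) +ᵥ τ)).congr_fun fun n => ?_
  rw [PowerSeries.coeff_rescale, qParam_two_vadd_one, neg_pow (qParam 2 τ)]
  ring

lemma mdifferentiable (hf : HasNomeExpansion f p) : MDiff f := by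
  rw [UpperHalfPlane.mdifferentiable_iff]
  intro τ₀ (hτ₀ : 0 < τ₀.im)
  let τ₁ : ℍ := ⟨(τ₀.im / 2 : ℝ) * Complex.I, by simpa using hτ₀⟩
  have hτ₁ : τ₁.im = τ₀.im / 2 := by simp [τ₁, UpperHalfPlane.im]
  have hU : IsOpen {τ : ℂ | τ₁.im < τ.im} := isOpen_lt continuous_const Complex.continuous_im
  have hbound (n : ℕ) (τ : ℂ) (hτ : τ₁.im < τ.im) :
      ‖p.coeff n * qParam 2 τ ^ n‖ ≤ ‖p.coeff n * qParam 2 τ₁ ^ n‖ := by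
    rw [norm_mul, norm_mul, norm_pow, norm_pow, norm_qParam, norm_qParam]
    refine mul_le_mul_of_nonneg_left (pow_le_pow_left₀ (Real.exp_pos _).le
      (Real.exp_le_exp.mpr ?_) n) (norm_nonneg _)
    change -2 * Real.pi * τ.im / 2 ≤ -2 * Real.pi * τ₁.im / 2
    linarith [mul_le_mul_of_nonneg_left hτ.le Real.pi_pos.le]
  have hdiff := Complex.differentiableOn_tsum_of_summable_norm (hf τ₁).summable.norm
    (fun n => (((differentiable_qParam (h := 2)).pow n).const_mul _).differentiableOn) hU hbound
  have hmem : τ₀ ∈ {τ : ℂ | τ₁.im < τ.im} := by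
    rw [Set.mem_ofPred_eq, hτ₁]
    exact half_lt_self hτ₀
  refine ((hdiff.differentiableAt (hU.mem_nhds hmem)).congr_of_eventuallyEq
    ?_).differentiableWithinAt
  filter_upwards [hU.mem_nhds hmem] with τ hτ
  have hτ' : 0 < τ.im := τ₁.im_pos.trans hτ
  rw [Function.comp_apply, ofComplex_apply_of_im_pos hτ', ← (hf _).tsum_eq]
  rfl

lemma hasSum_even (hf : HasNomeExpansion f p) (hT : ∀ τ : ℍ, f ((1 : ℝ) +ᵥ τ) = f τ) (τ : ℍ) :
    HasSum (fun m => p.coeff (2 * m) * qParam 1 τ ^ m) (f τ) := by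
  have heven : Function.Injective fun m : ℕ => 2 * m := fun a b h => by simpa using h
  have hmean := ((hf τ).add (hf ((1 : ℝ) +ᵥ τ))).div_const 2
  rw [hT, add_self_div_two, ← heven.hasSum_iff] at hmean
  · refine hmean.congr_fun fun m => ?_
    rw [Function.comp_apply, qParam_two_vadd_one, (even_two_mul m).neg_pow, pow_mul, qParam_two_sq,
      add_self_div_two]
  · intro n hn
    have hn' : Odd n := Nat.not_even_iff_odd.mp fun ⟨m, hm⟩ => hn ⟨m, by dsimp only; omega⟩
    rw [qParam_two_vadd_one, hn'.neg_pow]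
    ring

lemma isBoundedAtImInfty (hf : HasNomeExpansion f p) : IsBoundedAtImInfty f :=
  isBoundedAtImInfty_of_hasSum_qExpansion two_pos hf

lemma exists_modularForm {k : ℕ} (hf : HasNomeExpansion f p)
    (hT : ∀ τ : ℍ, f ((1 : ℝ) +ᵥ τ) = f τ)
    (hS : ∀ τ : ℍ, f (ModularGroup.S • τ) = (τ : ℂ) ^ k * f τ) :
    ∃ G : ModularForm 𝒮ℒ (k : ℤ), ∀ m, (qExpansion 1 G).coeff m = p.coeff (2 * m) := by
  have slash_S : f ∣[(k : ℤ)] ModularGroup.S = f := by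
    ext τ
    rw [SL_slash_apply, ModularGroup.denom_S, hS, zpow_neg, zpow_natCast]
    field_simp [τ.ne_zero]
  have slash_T : f ∣[(k : ℤ)] ModularGroup.T = f := by
    ext τ
    rw [SL_slash_apply, modular_T_smul, hT, ModularGroup.denom_apply]
    simp [ModularGroup.T]
  let G : ModularForm 𝒮ℒ (k : ℤ) :=
    { toFun := f
      slash_action_eq' := by
        rintro _ ⟨A, rfl⟩
        exact SlashInvariantForm.slash_action_generators_SL2Z slash_S slash_T A
      holo' := hf.mdifferentiable
      bdd_at_cusps' := fun hc => by
        rw [Subgroup.IsArithmetic.isCusp_iff_isCusp_SL2Z] at hc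
        refine (OnePoint.isBoundedAt_iff_forall_SL2Z hc).mpr fun γ _ => ?_
        rw [SlashInvariantForm.slash_action_generators_SL2Z slash_S slash_T]
        exact hf.isBoundedAtImInfty }
  exact ⟨G, fun m => (ModularFormClass.qExpansion_coeff_unique (f := G) one_pos
    one_mem_strictPeriods_SL (hf.hasSum_even hT) m).symm⟩

end HasNomeExpansion

end NomeExpansion

section ThetaPair

open UpperHalfPlane ModularForm MatrixGroups

/-- Functions `θ`, `σ` on the upper half plane which, together with `τ ↦ θ (τ + 1)`, transform under
`SL₂(ℤ)` like the theta series of an odd unimodular lattice of dimension `2k ≡ 4 (mod 8)` and of its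
shadow. -/
structure IsThetaPair (k : ℕ) (θ σ : ℍ → ℂ) : Prop where
  even_weight : Even k
  vadd_two : ∀ τ : ℍ, θ ((1 : ℝ) +ᵥ ((1 : ℝ) +ᵥ τ)) = θ τ
  smul_S : ∀ τ : ℍ, θ (ModularGroup.S • τ) = -(τ : ℂ) ^ k * θ τ
  vadd_one_smul_S : ∀ τ : ℍ, θ ((1 : ℝ) +ᵥ (ModularGroup.S • τ)) = -(τ : ℂ) ^ k * σ τ

lemma S_smul_S_smul (τ : ℍ) : ModularGroup.S • (ModularGroup.S • τ) = τ := by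
  simp only [modular_S_smul]
  ext
  simp

lemma vadd_one_smul_S_vadd_one_smul_S (τ : ℍ) :
    (1 : ℝ) +ᵥ (ModularGroup.S • ((1 : ℝ) +ᵥ (ModularGroup.S • ((1 : ℝ) +ᵥ τ)))) =
      ModularGroup.S • τ := by
  ext
  have h₀ : (τ : ℂ) ≠ 0 := τ.ne_zero
  have h₁ : 1 + (τ : ℂ) ≠ 0 := by simpa using ((1 : ℝ) +ᵥ τ).ne_zero
  have h₂ : 1 + (-(1 + (τ : ℂ)))⁻¹ = τ / (1 + τ) := by field_simp; ring
  simp only [modular_S_smul, coe_vadd, Complex.ofReal_one]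
  rw [h₂]
  field_simp
  ring

namespace IsThetaPair

variable {k l : ℕ} {θ σ θ' σ' : ℍ → ℂ}

lemma shadow_smul_S (h : IsThetaPair k θ σ) (τ : ℍ) :
    σ (ModularGroup.S • τ) = -(τ : ℂ) ^ k * θ ((1 : ℝ) +ᵥ τ) := by
  have hS := h.vadd_one_smul_S (ModularGroup.S • τ)
  have hcoe : ((ModularGroup.S • τ : ℍ) : ℂ) * τ = -1 := by
    rw [modular_S_smul]
    field_simp [τ.ne_zero]
  have hpow := h.even_weight.neg_one_pow (α := ℂ)
  rw [← hcoe, mul_pow] at hpow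
  rw [S_smul_S_smul] at hS
  rw [hS]
  linear_combination -σ (ModularGroup.S • τ) * hpow

lemma shadow_vadd_one (h : IsThetaPair k θ σ) (τ : ℍ) : σ ((1 : ℝ) +ᵥ τ) = -σ τ := by
  have hne : (((1 : ℝ) +ᵥ τ : ℍ) : ℂ) ^ k ≠ 0 := pow_ne_zero _ (ne_zero _)
  set w : ℍ := (1 : ℝ) +ᵥ (ModularGroup.S • ((1 : ℝ) +ᵥ τ)) with hw
  have hSw : (1 : ℝ) +ᵥ (ModularGroup.S • w) = ModularGroup.S • τ :=
    vadd_one_smul_S_vadd_one_smul_S τ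
  have hcoe : (w : ℂ) * ((1 : ℝ) +ᵥ τ : ℍ) = τ := by
    have h₁ : 1 + (τ : ℂ) ≠ 0 := by simpa using ((1 : ℝ) +ᵥ τ).ne_zero
    simp only [hw, modular_S_smul, coe_vadd, Complex.ofReal_one]
    field_simp
    ring
  have hθ : w ^ k * θ w = (τ : ℂ) ^ k * σ τ := by
    have := h.vadd_two (ModularGroup.S • w)
    rw [hSw, h.vadd_one_smul_S, h.smul_S] at this
    linear_combination this
  rw [h.vadd_one_smul_S, ← hcoe, mul_pow] at hθ
  have hw₀ : (w : ℂ) ^ k ≠ 0 := pow_ne_zero _ w.ne_zero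
  refine mul_left_cancel₀ (mul_ne_zero hw₀ hne) ?_
  linear_combination -hθ

lemma sq (h : IsThetaPair k θ σ) :
    IsThetaPair (2 * k) (θ * ((fun τ => θ ((1 : ℝ) +ᵥ τ)) - σ))
      (-(σ * (θ + fun τ => θ ((1 : ℝ) +ᵥ τ)))) where
  even_weight := even_two_mul k
  vadd_two τ := by simp [h.vadd_two, h.shadow_vadd_one]
  smul_S τ := by
    simp only [Pi.mul_apply, Pi.sub_apply, h.smul_S, h.vadd_one_smul_S, h.shadow_smul_S]
    ring
  vadd_one_smul_S τ := by
    simp only [Pi.mul_apply, Pi.sub_apply, Pi.neg_apply, Pi.add_apply, h.vadd_two, h.smul_S,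
      h.vadd_one_smul_S, h.shadow_vadd_one, h.shadow_smul_S]
    ring

lemma exists_modularForm_mul (h : IsThetaPair k θ σ) (h' : IsThetaPair l θ' σ')
    {p r p' r' : PowerSeries ℂ} (hθ : HasNomeExpansion θ p) (hσ : HasNomeExpansion σ r)
    (hθ' : HasNomeExpansion θ' p') (hσ' : HasNomeExpansion σ' r') :
    ∃ G : ModularForm 𝒮ℒ ((k + l : ℕ) : ℤ), ∀ m,
      (qExpansion 1 G).coeff m = 2 * (p * p').coeff (2 * m) + (r * r').coeff (2 * m) := by
  have hexp := ((hθ.mul hθ').add (hθ.comp_vadd_one.mul hθ'.comp_vadd_one)).add (hσ.mul hσ')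
  obtain ⟨G, hG⟩ := hexp.exists_modularForm (k := k + l) (fun τ => by
      simp only [Pi.add_apply, Pi.mul_apply, h.vadd_two, h'.vadd_two, h.shadow_vadd_one,
        h'.shadow_vadd_one]
      ring) (fun τ => by
      simp only [Pi.add_apply, Pi.mul_apply, h.smul_S, h'.smul_S, h.vadd_one_smul_S,
        h'.vadd_one_smul_S, h.shadow_smul_S, h'.shadow_smul_S]
      ring)
  refine ⟨G, fun m => ?_⟩
  rw [hG, ← map_mul, map_add, map_add, PowerSeries.coeff_rescale, (even_two_mul m).neg_one_pow]
  ring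

end IsThetaPair

end ThetaPair

section PoissonSummation

open MeasureTheory TopologicalSpace

lemma integral_fundamentalDomain_tsum {G α F : Type*} [AddGroup G] [Countable G] [AddAction G α]
    [MeasurableSpace G] [MeasurableSpace α] [MeasurableConstVAdd G α] [NormedAddCommGroup F]
    [NormedSpace ℝ F] {μ : Measure α} [VAddInvariantMeasure G α μ] {s : Set α}
    (hs : IsAddFundamentalDomain G s μ) {f : α → F} (hf : Integrable f μ) :
    ∫ x in s, ∑' g : G, f (g +ᵥ x) ∂μ = ∫ x, f x ∂μ := by
  rw [hs.integral_eq_tsum'' f hf, integral_tsum]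
  · exact fun g => (hf.1.comp_quasiMeasurePreserving
      (measurePreserving_vadd g μ).quasiMeasurePreserving).restrict
  · rw [← hs.lintegral_eq_tsum'' (‖f ·‖ₑ)]
    exact ne_of_lt hf.2

variable {ι : Type*}

/-- The inclusion of the standard lattice `ℤ^ι` in `ℝ^ι`. -/
def intVec : (ι → ℤ) →+ (ι → ℝ) := (Int.castAddHom ℝ).compLeft ι

/-- The quotient map from `ℝ^ι` to the torus `ℝ^ι / ℤ^ι`. -/
def toTorus : C(ι → ℝ, UnitAddTorus ι) := ⟨fun x i => (x i : UnitAddCircle), by fun_prop⟩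

lemma isOpenQuotientMap_toTorus : IsOpenQuotientMap (toTorus (ι := ι)) :=
  IsOpenQuotientMap.piMap fun _ => QuotientAddGroup.isOpenQuotientMap_mk

lemma exists_eq_add_intVec_of_toTorus_eq {x y : ι → ℝ} (h : toTorus x = toTorus y) :
    ∃ m : ι → ℤ, y = x + intVec m := by
  have (i : ι) : ∃ m : ℤ, y i = x i + m := by
    obtain ⟨m, hm⟩ := AddSubgroup.mem_zmultiples_iff.mp (QuotientAddGroup.eq.mp (congrFun h i))
    exact ⟨m, by rw [zsmul_one] at hm; rw [hm]; abel⟩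
  choose m hm using this
  exact ⟨m, funext hm⟩

lemma exists_torus_eq_tsum_add_intVec [Finite ι] {f : C(ι → ℝ, ℂ)}
    (hf : ∀ K : Compacts (ι → ℝ), Summable fun m : ι → ℤ =>
      ‖(f.comp (ContinuousMap.addRight (intVec m))).restrict K‖) :
    ∃ P : C(UnitAddTorus ι, ℂ), ∀ x, P (toTorus x) = ∑' m : ι → ℤ, f (x + intVec m) := by
  let g : C(ι → ℝ, ℂ) := ∑' m : ι → ℤ, f.comp (ContinuousMap.addRight (intVec m))
  have hg (x : ι → ℝ) : g x = ∑' m : ι → ℤ, f (x + intVec m) :=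
    (ContinuousMap.tsum_apply (ContinuousMap.summable_of_locally_summable_norm hf) x).symm
  have hper : Function.FactorsThrough g toTorus := fun x y hxy => by
    obtain ⟨l, rfl⟩ := exists_eq_add_intVec_of_toTorus_eq hxy
    rw [hg, hg, ← (Equiv.addLeft l).tsum_eq fun m => f (x + intVec m)]
    refine tsum_congr fun m => ?_
    rw [Equiv.coe_addLeft, map_add intVec, add_assoc]
  refine ⟨isOpenQuotientMap_toTorus.isQuotientMap.lift g hper, fun x => ?_⟩
  rw [← hg, ← ContinuousMap.comp_apply, Topology.IsQuotientMap.lift_comp]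

variable [Fintype ι]

lemma mFourier_toTorus (k : ι → ℤ) (x : ι → ℝ) :
    UnitAddTorus.mFourier k (toTorus x) =
      Complex.exp (2 * Real.pi * Complex.I * (intVec k ⬝ᵥ x : ℝ)) := by
  simp only [UnitAddTorus.mFourier, toTorus, ContinuousMap.coe_mk, fourier_coe_apply,
    ← Complex.exp_sum, dotProduct, intVec, AddMonoidHom.compLeft_apply, Int.coe_castAddHom,
    Function.comp_apply]
  congr 1
  push_cast
  rw [Finset.mul_sum]
  refine Finset.sum_congr rfl fun i _ => ?_
  ring

variable {E : Type*} [NormedAddCommGroup E] [NormedSpace ℝ E]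

/-- The integer vectors, as coordinates of the vectors of the lattice spanned by a basis `b`. -/
def latticeEquiv (b : Module.Basis ι ℝ E) : (ι → ℤ) ≃ Submodule.span ℤ (Set.range b) :=
  (b.restrictScalars ℤ).equivFun.symm.toEquiv

lemma coe_latticeEquiv (b : Module.Basis ι ℝ E) (m : ι → ℤ) :
    (latticeEquiv b m : E) = b.equivFunL.symm (intVec m) := by
  change _ = b.equivFun.symm (intVec m)
  simp [latticeEquiv, intVec, Module.Basis.equivFun_symm_apply, Int.cast_smul_eq_zsmul]

lemma unitCube_ae_eq_fundamentalDomain :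
    {x : ι → ℝ | ∀ i, x i ∈ Set.Ioc ((0 : ι → ℝ) i) ((0 : ι → ℝ) i + 1)} =ᵐ[volume]
      ZSpan.fundamentalDomain (Pi.basisFun ℝ ι) := by
  have hcube : {x : ι → ℝ | ∀ i, x i ∈ Set.Ioc ((0 : ι → ℝ) i) ((0 : ι → ℝ) i + 1)} =
      Set.univ.pi fun i => Set.Ioc ((0 : ι → ℝ) i) ((1 : ι → ℝ) i) := by
    ext x; simp
  rw [hcube, ZSpan.fundamentalDomain_pi_basisFun]
  exact Measure.univ_pi_Ioc_ae_eq_Icc.trans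
    (Measure.univ_pi_Ico_ae_eq_Icc (f := (0 : ι → ℝ)) (g := (1 : ι → ℝ))).symm

lemma integral_unitCube_tsum_add_intVec {f : (ι → ℝ) → ℂ} (hf : Integrable f) :
    ∫ x in {x : ι → ℝ | ∀ i, x i ∈ Set.Ioc ((0 : ι → ℝ) i) ((0 : ι → ℝ) i + 1)},
      ∑' m : ι → ℤ, f (x + intVec m) = ∫ x, f x := by
  have : VAddInvariantMeasure (Submodule.span ℤ (Set.range (Pi.basisFun ℝ ι))) (ι → ℝ) volume :=
    inferInstanceAs <| VAddInvariantMeasure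
      (Submodule.span ℤ (Set.range (Pi.basisFun ℝ ι))).toAddSubgroup (ι → ℝ) volume
  rw [setIntegral_congr_set unitCube_ae_eq_fundamentalDomain,
    ← integral_fundamentalDomain_tsum (ZSpan.isAddFundamentalDomain (Pi.basisFun ℝ ι) volume) hf]
  congr 1 with x
  rw [← (latticeEquiv (Pi.basisFun ℝ ι)).tsum_eq]
  refine tsum_congr fun m => ?_
  rw [Submodule.vadd_def, vadd_eq_add, coe_latticeEquiv, add_comm x]
  change _ = f ((Pi.basisFun ℝ ι).equivFun.symm (intVec m) + x)
  rw [Pi.basisFun_equivFun]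
  rfl

lemma mFourier_toTorus_add_intVec (k m : ι → ℤ) (x : ι → ℝ) :
    UnitAddTorus.mFourier k (toTorus (x + intVec m)) = UnitAddTorus.mFourier k (toTorus x) := by
  congr 1
  ext i
  simp [toTorus, intVec]

theorem hasSum_mFourier_tsum_add_intVec {f : C(ι → ℝ, ℂ)} (hfi : Integrable f)
    (hf : ∀ K : Compacts (ι → ℝ), Summable fun m : ι → ℤ =>
      ‖(f.comp (ContinuousMap.addRight (intVec m))).restrict K‖)
    (hF : Summable fun k : ι → ℤ => ∫ y, UnitAddTorus.mFourier (-k) (toTorus y) * f y)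
    (x : ι → ℝ) :
    HasSum (fun k : ι → ℤ => (∫ y, UnitAddTorus.mFourier (-k) (toTorus y) * f y) *
      UnitAddTorus.mFourier k (toTorus x)) (∑' m : ι → ℤ, f (x + intVec m)) := by
  obtain ⟨P, hP⟩ := exists_torus_eq_tsum_add_intVec hf
  have hcoeff (k : ι → ℤ) : UnitAddTorus.mFourierCoeff P k =
      ∫ y, UnitAddTorus.mFourier (-k) (toTorus y) * f y := by
    have hint : Integrable fun y => UnitAddTorus.mFourier (-k) (toTorus y) * f y :=
      hfi.bdd_mul (c := 1) (by fun_prop) (.of_forall fun y =>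
        ((UnitAddTorus.mFourier (-k)).norm_coe_le_norm _).trans_eq UnitAddTorus.mFourier_norm)
    rw [UnitAddTorus.mFourierCoeff_eq_integral _ _ 0, ← integral_unitCube_tsum_add_intVec hint]
    congr 1 with y
    simp only [mFourier_toTorus_add_intVec, tsum_mul_left, smul_eq_mul, ← hP]
    rfl
  rw [← hP]
  simp only [← hcoeff] at hF ⊢
  exact UnitAddTorus.hasSum_mFourier_series_apply_of_summable hF _

end PoissonSummation

section LatticeTheta

open MeasureTheory TopologicalSpace Filter UpperHalfPlane
open scoped Real

variable {E : Type*} [NormedAddCommGroup E]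

/-- The Gaussian `v ↦ e^{πiτ‖v‖²}`. -/
def gaussian (τ : ℍ) : C(E, ℂ) :=
  ⟨fun v => Complex.exp (π * Complex.I * τ * (‖v‖ ^ 2 : ℝ)), by fun_prop⟩

/-- The theta series `∑ e^{πiτ‖y‖²}` of a set `X` of vectors, summed over `y ∈ X`. -/
def thetaSeries (X : Set E) (τ : ℍ) : ℂ := ∑' y : X, gaussian τ (y : E)

lemma norm_gaussian (τ : ℍ) (v : E) : ‖gaussian τ v‖ = Real.exp (-(π * τ.im) * ‖v‖ ^ 2) := by
  rw [gaussian, ContinuousMap.coe_mk, Complex.norm_exp, Complex.re_mul_ofReal]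
  simp [Complex.mul_re]

variable [InnerProductSpace ℝ E]

lemma norm_gaussian_add_le (τ : ℍ) (v w : E) : ‖gaussian τ (v + w)‖ ≤
    Real.exp (π * τ.im * ‖v‖ ^ 2) * Real.exp (-(π * τ.im / 2) * ‖w‖ ^ 2) := by
  have hw : ‖w‖ ^ 2 ≤ 2 * ‖v + w‖ ^ 2 + 2 * ‖v‖ ^ 2 := by
    have := parallelogram_law_with_norm ℝ (v + w) v
    rw [add_sub_cancel_left] at this
    nlinarith [sq_nonneg ‖v + w + v‖]
  rw [norm_gaussian, ← Real.exp_add, Real.exp_le_exp]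
  nlinarith [mul_le_mul_of_nonneg_left hw (mul_pos Real.pi_pos τ.im_pos).le]

lemma nondegenerate_innerₗ : LinearMap.BilinForm.Nondegenerate (innerₗ E) :=
  ⟨fun v h => inner_self_eq_zero.mp (h v), fun v h => inner_self_eq_zero.mp (h v)⟩

section DualBasis

variable {ι : Type*} [Fintype ι]

/-- The basis dual to `b` with respect to the inner product. -/
def innerDualBasis [DecidableEq ι] (b : Module.Basis ι ℝ E) : Module.Basis ι ℝ E :=
  LinearMap.BilinForm.dualBasis (innerₗ E) nondegenerate_innerₗ b

lemma inner_latticeEquiv_innerDualBasis [DecidableEq ι] (b : Module.Basis ι ℝ E) (k : ι → ℤ)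
    (y : ι → ℝ) :
    ⟪(latticeEquiv (innerDualBasis b) k : E), b.equivFunL.symm y⟫ = intVec k ⬝ᵥ y := by
  have hrepr (i : ι) : ⟪(latticeEquiv (innerDualBasis b) k : E), b i⟫ = intVec k i := by
    rw [coe_latticeEquiv, ← innerₗ_apply_apply,
      ← LinearMap.BilinForm.dualBasis_repr_apply nondegenerate_innerₗ]
    exact congrFun ((innerDualBasis b).equivFun.apply_symm_apply (intVec k)) i
  change ⟪_, b.equivFun.symm y⟫ = _
  simp only [Module.Basis.equivFun_symm_apply, inner_sum, real_inner_smul_right, hrepr, dotProduct,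
    mul_comm]

end DualBasis

variable [FiniteDimensional ℝ E]

lemma summable_exp_neg_mul_norm_sq (Λ : Submodule ℤ E) [DiscreteTopology Λ] {a : ℝ} (ha : 0 < a) :
    Summable fun w : Λ => Real.exp (-a * ‖(w : E)‖ ^ 2) := by
  have htop : Tendsto (fun w : Λ => ‖(w : E)‖) cofinite atTop :=
    (tendsto_norm_cocompact_atTop (E := E)).comp <|
      Λ.toAddSubgroup.tendsto_coe_cofinite_of_discrete
        (isDiscrete_iff_discreteTopology.mpr ‹DiscreteTopology Λ›)
  have hexp := (exp_neg_mul_sq_isLittleO_exp_neg ha).trans <| by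
    simpa only [neg_one_mul] using isLittleO_exp_neg_mul_rpow_atTop one_pos
      (-(Module.finrank ℤ Λ + 1 : ℝ))
  exact summable_of_isBigO (ZLattice.summable_norm_rpow Λ _ (by linarith))
    (hexp.isBigO.comp_tendsto htop)

lemma summable_norm_restrict_gaussian_comp_addRight (Λ : Submodule ℤ E) [DiscreteTopology Λ]
    (τ : ℍ) (K : Compacts E) :
    Summable fun w : Λ => ‖((gaussian τ).comp (ContinuousMap.addRight (w : E))).restrict K‖ := by
  obtain ⟨R, hR⟩ := K.isCompact.isBounded.exists_norm_le
  refine .of_nonneg_of_le (fun w => norm_nonneg _) (fun w => ?_) <|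
    (summable_exp_neg_mul_norm_sq Λ (half_pos (mul_pos Real.pi_pos τ.im_pos))).mul_left
      (Real.exp (π * τ.im * R ^ 2))
  refine (ContinuousMap.norm_le _ (by positivity)).mpr fun v =>
    (norm_gaussian_add_le τ _ _).trans ?_
  have := τ.im_pos
  gcongr
  exact hR v v.2

lemma summable_gaussian_add (Λ : Submodule ℤ E) [DiscreteTopology Λ] (τ : ℍ) (x : E) :
    Summable fun w : Λ => gaussian τ (x + w) :=
  .of_norm_bounded
    ((summable_exp_neg_mul_norm_sq Λ (half_pos (mul_pos Real.pi_pos τ.im_pos))).mul_left _)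
    fun w => norm_gaussian_add_le τ x w

lemma summable_norm_restrict_gaussian_comp_equivFunL_symm {ι : Type*} [Finite ι]
    (b : Module.Basis ι ℝ E) (τ : ℍ) (K : Compacts (ι → ℝ)) :
    Summable fun m : ι → ℤ => ‖(((gaussian τ).comp (b.equivFunL.symm : C(ι → ℝ, E))).comp
      (ContinuousMap.addRight (intVec m))).restrict K‖ := by
  have := Fintype.ofFinite ι
  have := summable_norm_restrict_gaussian_comp_addRight (Submodule.span ℤ (Set.range b)) τ
    (K.map b.equivFunL.symm b.equivFunL.symm.continuous)
  rw [← (latticeEquiv b).summable_iff] at this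
  refine .of_nonneg_of_le (fun m => norm_nonneg _) (fun m => ?_) this
  refine (ContinuousMap.norm_le _ (norm_nonneg _)).mpr fun y => ?_
  have hy : b.equivFunL.symm y ∈ K.map b.equivFunL.symm b.equivFunL.symm.continuous :=
    Set.mem_image_of_mem _ y.2
  convert! ContinuousMap.norm_coe_le_norm (((gaussian τ).comp
    (ContinuousMap.addRight (latticeEquiv b m : E))).restrict _) ⟨_, hy⟩ using 2
  simp only [ContinuousMap.restrict_apply, ContinuousMap.comp_apply, ContinuousMap.coe_addRight,
    coe_latticeEquiv, ContinuousMap.coe_coe, map_add]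

variable [MeasurableSpace E] [BorelSpace E] {ι : Type*} [Fintype ι]

lemma exists_map_equivFunL_symm_volume (b : Module.Basis ι ℝ E) :
    ∃ c : NNReal, volume.map b.equivFunL.symm = c • (volume : Measure E) :=
  have : (volume.map b.equivFunL.symm : Measure E).IsAddHaarMeasure :=
    b.equivFunL.symm.isAddHaarMeasure_map volume
  ⟨_, Measure.isAddLeftInvariant_eq_smul _ volume⟩

lemma exists_integral_comp_equivFunL_symm (b : Module.Basis ι ℝ E) :
    ∃ c : ℂ, ∀ f : E → ℂ, ∫ y, f (b.equivFunL.symm y) = c * ∫ v, f v := by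
  obtain ⟨c, hc⟩ := exists_map_equivFunL_symm_volume b
  have hemb : MeasurableEmbedding b.equivFunL.symm :=
    b.equivFunL.symm.toHomeomorph.measurableEmbedding
  refine ⟨(c : ℝ), fun f => ?_⟩
  rw [← hemb.integral_map, hc, integral_smul_nnreal_measure]
  rfl

lemma integrable_comp_equivFunL_symm (b : Module.Basis ι ℝ E) {f : E → ℂ} (hf : Integrable f) :
    Integrable fun y => f (b.equivFunL.symm y) := by
  obtain ⟨c, hc⟩ := exists_map_equivFunL_symm_volume b
  have hemb : MeasurableEmbedding b.equivFunL.symm :=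
    b.equivFunL.symm.toHomeomorph.measurableEmbedding
  refine hemb.integrable_map_iff.mp ?_
  rw [hc]
  exact hf.smul_measure_nnreal

lemma neg_pi_mul_I_mul_re_pos (τ : ℍ) : 0 < (-(π * Complex.I * τ)).re := by
  simpa [Complex.mul_re] using mul_pos Real.pi_pos τ.im_pos

lemma integrable_gaussian (τ : ℍ) : Integrable (gaussian (E := E) τ) := by
  simpa [gaussian] using
    GaussianFourier.integrable_cexp_neg_mul_sq_norm_add (neg_pi_mul_I_mul_re_pos τ) 0 (0 : E)

lemma integral_exp_inner_mul_gaussian (τ : ℍ) (w : E) :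
    ∫ v, Complex.exp (2 * π * Complex.I * (-⟪w, v⟫ : ℝ)) * gaussian τ v =
      (Complex.I / τ) ^ (Module.finrank ℝ E / 2 : ℂ) * gaussian (ModularGroup.S • τ) w := by
  have hτ := τ.ne_zero
  convert GaussianFourier.integral_cexp_neg_mul_sq_norm_add (neg_pi_mul_I_mul_re_pos τ)
    (-(2 * π * Complex.I)) w using 2
  · ext v
    rw [gaussian, ContinuousMap.coe_mk, ← Complex.exp_add]
    congr 1
    push_cast
    ring
  · congr 1
    field_simp
    rw [Complex.I_sq]
  · rw [gaussian, ContinuousMap.coe_mk, modular_S_smul]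
    congr 1
    push_cast [coe_mk]
    field_simp
    norm_num

lemma exists_hasSum_gaussian_span_innerDualBasis [DecidableEq ι] (b : Module.Basis ι ℝ E) :
    ∃ c : ℂ, ∀ (τ : ℍ) (x : E), HasSum (fun w : Submodule.span ℤ (Set.range (innerDualBasis b)) =>
      c * (Complex.I / τ) ^ (Module.finrank ℝ E / 2 : ℂ) *
        (gaussian (ModularGroup.S • τ) (w : E) *
          Complex.exp (2 * π * Complex.I * (⟪(w : E), x⟫ : ℝ))))
      (∑' w : Submodule.span ℤ (Set.range b), gaussian τ (x + w)) := by
  obtain ⟨c, hc⟩ := exists_integral_comp_equivFunL_symm b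
  refine ⟨c, fun τ x => ?_⟩
  let f : C(ι → ℝ, ℂ) := (gaussian τ).comp (b.equivFunL.symm : C(ι → ℝ, E))
  have hcoeff (k : ι → ℤ) : ∫ y, UnitAddTorus.mFourier (-k) (toTorus y) * f y =
      c * (Complex.I / τ) ^ (Module.finrank ℝ E / 2 : ℂ) *
        gaussian (ModularGroup.S • τ) (latticeEquiv (innerDualBasis b) k : E) := by
    simp only [mFourier_toTorus, map_neg, neg_dotProduct, ← inner_latticeEquiv_innerDualBasis b]
    refine (hc fun v => Complex.exp (2 * π * Complex.I *
      (-⟪(latticeEquiv (innerDualBasis b) k : E), v⟫ : ℝ)) * gaussian τ v).trans ?_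
    rw [integral_exp_inner_mul_gaussian, mul_assoc]
  have hsum : Summable fun k : ι → ℤ => ∫ y, UnitAddTorus.mFourier (-k) (toTorus y) * f y := by
    simp only [hcoeff]
    have := summable_gaussian_add (Submodule.span ℤ (Set.range (innerDualBasis b)))
      (ModularGroup.S • τ) 0
    simp only [zero_add] at this
    exact ((latticeEquiv (innerDualBasis b)).summable_iff.mpr this).mul_left _
  have := hasSum_mFourier_tsum_add_intVec (integrable_comp_equivFunL_symm b (integrable_gaussian τ))
    (summable_norm_restrict_gaussian_comp_equivFunL_symm b τ) hsum (b.equivFunL x)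
  rw [← (latticeEquiv (innerDualBasis b)).hasSum_iff, ← (latticeEquiv b).tsum_eq]
  convert this using 1
  · ext k
    rw [hcoeff, mFourier_toTorus, ← inner_latticeEquiv_innerDualBasis b,
      b.equivFunL.symm_apply_apply]
    simp only [Function.comp_apply, mul_assoc]
  · refine tsum_congr fun m => ?_
    change _ = gaussian τ (b.equivFunL.symm (b.equivFunL x + intVec m))
    rw [map_add b.equivFunL.symm, b.equivFunL.symm_apply_apply, coe_latticeEquiv]

end LatticeTheta

section SelfDual

variable {E : Type*} [NormedAddCommGroup E] [InnerProductSpace ℝ E]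

/-- `Λ` is a self-dual (unimodular) lattice: it consists of the vectors that have integral inner
product with all its vectors. -/
def IsSelfDual (Λ : Submodule ℤ E) : Prop :=
  LinearMap.BilinForm.dualSubmodule (innerₗ E) Λ = Λ

/-- The vectors `u` with `⟪w, u⟫ ≡ ‖w‖² / 2` modulo `1` for all `w ∈ Λ`, which are the halves of the
characteristic vectors of a self-dual `Λ`. They form the shadow of `Λ` when `Λ` is odd. -/
def halfCharacteristic (Λ : Submodule ℤ E) : Set E :=
  {u | ∀ w ∈ Λ, ∃ m : ℤ, ⟪w, u⟫ = ‖w‖ ^ 2 / 2 + m}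

lemma isSelfDual_iff {Λ : Submodule ℤ E} :
    IsSelfDual Λ ↔ ∀ x, x ∈ Λ ↔ ∀ y ∈ Λ, ∃ m : ℤ, ⟪x, y⟫ = m := by
  simp only [IsSelfDual, SetLike.ext_iff, LinearMap.BilinForm.mem_dualSubmodule,
    innerₗ_apply_apply, Submodule.mem_one, algebraMap_int_eq, eq_intCast, eq_comm, Iff.comm]

lemma exists_forall_inner_basis_eq [FiniteDimensional ℝ E] {ι : Type*} (b : Module.Basis ι ℝ E)
    (a : ι → ℝ) : ∃ u : E, ∀ i, ⟪u, b i⟫ = a i := by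
  refine ⟨(InnerProductSpace.toDual ℝ E).symm (LinearMap.toContinuousLinearMap (b.constr ℝ a)),
    fun i => ?_⟩
  rw [InnerProductSpace.toDual_symm_apply, LinearMap.coe_toContinuousLinearMap', b.constr_basis]

variable {Λ : Submodule ℤ E}

namespace IsSelfDual

variable (hΛ : IsSelfDual Λ)
include hΛ

lemma mem_iff {x : E} : x ∈ Λ ↔ ∀ y ∈ Λ, ∃ m : ℤ, ⟪x, y⟫ = m := isSelfDual_iff.mp hΛ x

lemma exists_int_inner_eq {x y : E} (hx : x ∈ Λ) (hy : y ∈ Λ) : ∃ m : ℤ, ⟪x, y⟫ = m :=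
  hΛ.mem_iff.mp hx y hy

lemma exists_nat_norm_sq_eq {x : E} (hx : x ∈ Λ) : ∃ m : ℕ, ‖x‖ ^ 2 = m := by
  obtain ⟨m, hm⟩ := hΛ.exists_int_inner_eq hx hx
  rw [real_inner_self_eq_norm_sq] at hm
  lift m to ℕ using by exact_mod_cast hm ▸ sq_nonneg ‖x‖
  exact ⟨m, by exact_mod_cast hm⟩

lemma one_le_norm {x : E} (hx : x ∈ Λ) (h0 : x ≠ 0) : 1 ≤ ‖x‖ := by
  obtain ⟨m, hm⟩ := hΛ.exists_nat_norm_sq_eq hx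
  have hpos : 0 < m := by
    have : 0 < ‖x‖ ^ 2 := by positivity
    exact_mod_cast hm ▸ this
  rw [← one_le_sq_iff₀ (norm_nonneg x), hm]
  exact_mod_cast hpos

lemma discreteTopology : DiscreteTopology Λ :=
  .of_forall_le_dist (r := 1) one_pos fun x y hxy => by
    change 1 ≤ dist x y
    rw [Subtype.dist_eq, dist_eq_norm]
    exact hΛ.one_le_norm (Λ.sub_mem x.2 y.2) (sub_ne_zero.mpr (Subtype.coe_ne_coe.mpr hxy))

lemma mem_halfCharacteristic_iff_sub_mem {u x : E} (hu : u ∈ halfCharacteristic Λ) :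
    x ∈ halfCharacteristic Λ ↔ x - u ∈ Λ := by
  rw [hΛ.mem_iff]
  refine forall₂_congr fun w _ => ?_
  obtain ⟨m, hm⟩ := hu w ‹_›
  rw [inner_sub_left, real_inner_comm, real_inner_comm w u, hm]
  exact ⟨fun ⟨k, hk⟩ => ⟨k - m, by rw [hk]; push_cast; ring⟩,
    fun ⟨k, hk⟩ => ⟨k + m, by push_cast; linarith⟩⟩

variable [FiniteDimensional ℝ E]

lemma span_eq_top : Submodule.span ℝ (Λ : Set E) = ⊤ := by
  rw [← Submodule.orthogonal_eq_bot_iff]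
  by_contra hne
  obtain ⟨v, hv, hv0⟩ := Submodule.exists_mem_ne_zero_of_ne_bot hne
  have hmem : (1 / (2 * ‖v‖)) • v ∈ Λ := hΛ.mem_iff.mpr fun y hy => ⟨0, by
    rw [real_inner_smul_left, real_inner_comm,
      (Submodule.mem_orthogonal _ _).mp hv y (Submodule.subset_span hy), mul_zero, Int.cast_zero]⟩
  have hnorm : ‖(1 / (2 * ‖v‖)) • v‖ = 1 / 2 := by
    rw [norm_smul, Real.norm_of_nonneg (by positivity)]
    field_simp
  have := hΛ.one_le_norm hmem (smul_ne_zero (by positivity) hv0)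
  rw [hnorm] at this
  norm_num at this

lemma exists_basis_span_eq :
    ∃ (ι : Type) (_ : Fintype ι) (b : Module.Basis ι ℝ E), Submodule.span ℤ (Set.range b) = Λ := by
  have := hΛ.discreteTopology
  have : IsZLattice ℝ Λ := ⟨hΛ.span_eq_top⟩
  have := ZLattice.module_finite ℝ Λ
  have := ZLattice.module_free ℝ Λ
  exact ⟨_, inferInstance, (Module.finBasis ℤ Λ).ofZLatticeBasis ℝ Λ,
    (Module.finBasis ℤ Λ).ofZLatticeBasis_span ℝ Λ⟩

-- `w ↦ ‖w‖² / 2` is additive modulo `1`, so it suffices to prescribe `⟪w, u⟫` on a basis of `Λ`.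
lemma halfCharacteristic_nonempty : (halfCharacteristic Λ).Nonempty := by
  obtain ⟨ι, _, b, hb⟩ := hΛ.exists_basis_span_eq
  obtain ⟨u, hu⟩ := exists_forall_inner_basis_eq b fun i => ‖b i‖ ^ 2 / 2
  refine ⟨u, fun w hw => ?_⟩
  rw [← hb, ← Submodule.mem_toAddSubgroup, Submodule.span_int_eq_addSubgroupClosure] at hw
  induction hw using AddSubgroup.closure_induction with
  | mem w hw =>
    obtain ⟨i, rfl⟩ := hw
    exact ⟨0, by rw [real_inner_comm, hu, Int.cast_zero, add_zero]⟩
  | zero => exact ⟨0, by simp⟩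
  | add w w' hw hw' ih ih' =>
    rw [← Submodule.span_int_eq_addSubgroupClosure, Submodule.mem_toAddSubgroup, hb] at hw hw'
    obtain ⟨m, hm⟩ := ih
    obtain ⟨m', hm'⟩ := ih'
    obtain ⟨k, hk⟩ := hΛ.exists_int_inner_eq hw hw'
    exact ⟨m + m' - k, by
      rw [inner_add_left, norm_add_sq_real, hm, hm', hk]; push_cast; ring⟩
  | neg w hw ih =>
    rw [← Submodule.span_int_eq_addSubgroupClosure, Submodule.mem_toAddSubgroup, hb] at hw
    obtain ⟨m, hm⟩ := ih
    obtain ⟨k, hk⟩ := hΛ.exists_nat_norm_sq_eq hw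
    exact ⟨-m - k, by rw [inner_neg_left, norm_neg, hm]; push_cast; rw [← hk]; ring⟩

end IsSelfDual

end SelfDual

section SelfDualTheta

open UpperHalfPlane
open scoped Real

variable {E : Type*} [NormedAddCommGroup E]

lemma gaussian_vadd_one (τ : ℍ) (v : E) :
    gaussian ((1 : ℝ) +ᵥ τ) v = Complex.exp (π * Complex.I * (‖v‖ ^ 2 : ℝ)) * gaussian τ v := by
  simp only [gaussian, ContinuousMap.coe_mk, coe_vadd, ← Complex.exp_add]
  congr 1
  push_cast
  ring

lemma S_smul_I : ModularGroup.S • I = I := by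
  rw [modular_S_smul]
  ext
  simp

lemma thetaSeries_add_left_image (X : Set E) (u : E) (τ : ℍ) :
    thetaSeries ((u + ·) '' X) τ = ∑' w : X, gaussian τ (u + w) :=
  tsum_image (gaussian τ) (add_right_injective u).injOn

variable [InnerProductSpace ℝ E] {Λ : Submodule ℤ E}

lemma gaussian_mul_exp_inner_halfCharacteristic {u : E} (hu : u ∈ halfCharacteristic Λ) (τ : ℍ)
    {w : E} (hw : w ∈ Λ) : gaussian τ w * Complex.exp (2 * π * Complex.I * (⟪w, u⟫ : ℝ)) =
      gaussian ((1 : ℝ) +ᵥ τ) w := by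
  obtain ⟨m, hm⟩ := hu w hw
  rw [gaussian_vadd_one, mul_comm, hm]
  congr 1
  refine Complex.exp_eq_exp_iff_exists_int.mpr ⟨m, ?_⟩
  push_cast
  ring

lemma I_div_cpow_half {n : ℕ} (hn : n % 8 = 4) (τ : ℍ) :
    (Complex.I / τ) ^ (n / 2 : ℂ) = -((τ : ℂ) ^ (n / 2))⁻¹ := by
  obtain ⟨j, rfl⟩ : ∃ j, n = 2 * (2 * (2 * j + 1)) := ⟨n / 8, by lia⟩
  have hcast : ((2 * (2 * (2 * j + 1)) : ℕ) : ℂ) / 2 = (2 * (2 * j + 1) : ℕ) := by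
    push_cast
    ring
  rw [hcast, Complex.cpow_natCast, div_pow, pow_mul, Complex.I_sq,
    Odd.neg_one_pow (odd_two_mul_add_one j), Nat.mul_div_cancel_left _ two_pos, neg_div, one_div]

namespace IsSelfDual

variable (hΛ : IsSelfDual Λ)
include hΛ

lemma thetaSeries_vadd_two (τ : ℍ) :
    thetaSeries (Λ : Set E) ((1 : ℝ) +ᵥ ((1 : ℝ) +ᵥ τ)) = thetaSeries (Λ : Set E) τ := by
  refine tsum_congr fun w => ?_
  obtain ⟨m, hm⟩ := hΛ.exists_nat_norm_sq_eq w.2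
  rw [gaussian_vadd_one, gaussian_vadd_one, ← mul_assoc, ← Complex.exp_add, hm]
  convert one_mul _
  exact Complex.exp_eq_one_iff.mpr ⟨m, by push_cast; ring⟩

lemma halfCharacteristic_eq_image {u : E} (hu : u ∈ halfCharacteristic Λ) :
    halfCharacteristic Λ = (u + ·) '' Λ := by
  ext x
  rw [hΛ.mem_halfCharacteristic_iff_sub_mem hu, Set.image_add_left, Set.mem_preimage,
    neg_add_eq_sub]
  rfl

lemma exp_norm_sq_eq {u x : E} (hu : u ∈ halfCharacteristic Λ) (hx : x ∈ halfCharacteristic Λ) :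
    Complex.exp (π * Complex.I * (‖x‖ ^ 2 : ℝ)) = Complex.exp (π * Complex.I * (‖u‖ ^ 2 : ℝ)) := by
  have hw := (hΛ.mem_halfCharacteristic_iff_sub_mem hu).mp hx
  obtain ⟨m, hm⟩ := hu _ hw
  obtain ⟨k, hk⟩ := hΛ.exists_nat_norm_sq_eq hw
  have hnorm : ‖x‖ ^ 2 = ‖u‖ ^ 2 + 2 * (k + m : ℤ) := by
    rw [← sub_add_cancel x u, norm_add_sq_real, hm, hk]
    push_cast
    ring
  refine Complex.exp_eq_exp_iff_exists_int.mpr ⟨k + m, ?_⟩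
  rw [hnorm]
  push_cast
  ring

variable [FiniteDimensional ℝ E]

lemma summable_gaussian (τ : ℍ) : Summable fun w : Λ => gaussian τ (w : E) := by
  have := hΛ.discreteTopology
  simpa only [zero_add] using summable_gaussian_add Λ τ 0

lemma summable_gaussian_halfCharacteristic (τ : ℍ) :
    Summable fun y : halfCharacteristic Λ => gaussian τ (y : E) := by
  have := hΛ.discreteTopology
  obtain ⟨u, hu⟩ := hΛ.halfCharacteristic_nonempty
  rw [hΛ.halfCharacteristic_eq_image hu]
  exact (Equiv.Set.image _ _ (add_right_injective u)).summable_iff.mp (summable_gaussian_add Λ τ u)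

lemma thetaSeries_I_ne_zero : thetaSeries (Λ : Set E) I ≠ 0 := by
  have hreal (v : E) : gaussian I v = (Real.exp (-π * ‖v‖ ^ 2) : ℝ) := by
    rw [gaussian, ContinuousMap.coe_mk, Complex.ofReal_exp]
    congr 1
    push_cast [coe_I]
    linear_combination (π * ‖v‖ ^ 2 : ℂ) * Complex.I_mul_I
  have hsum := hΛ.summable_gaussian I
  simp only [hreal, Complex.summable_ofReal] at hsum
  simp only [thetaSeries, hreal, ← Complex.ofReal_tsum, Complex.ofReal_ne_zero]
  exact (hsum.tsum_pos (fun _ => (Real.exp_pos _).le) ⟨0, Λ.zero_mem⟩ (Real.exp_pos _)).ne'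

variable [MeasurableSpace E] [BorelSpace E]

theorem hasSum_gaussian_add (τ : ℍ) (x : E) :
    HasSum (fun w : Λ => (Complex.I / τ) ^ (Module.finrank ℝ E / 2 : ℂ) *
      (gaussian (ModularGroup.S • τ) (w : E) *
        Complex.exp (2 * π * Complex.I * (⟪(w : E), x⟫ : ℝ))))
      (∑' w : Λ, gaussian τ (x + w)) := by
  classical
  obtain ⟨ι, _, b, hb⟩ := hΛ.exists_basis_span_eq
  have hdual : Submodule.span ℤ (Set.range (innerDualBasis b)) = Λ := by
    rw [innerDualBasis, ← LinearMap.BilinForm.dualSubmodule_span_of_basis, hb, hΛ]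
  obtain ⟨c, hc⟩ := exists_hasSum_gaussian_span_innerDualBasis b
  rw [hdual, hb] at hc
  have hc1 : c = 1 := by
    have := (hc I 0).tsum_eq
    simp only [S_smul_I, coe_I, div_self Complex.I_ne_zero, Complex.one_cpow, mul_one, zero_add,
      inner_zero_right, Complex.ofReal_zero, mul_zero, Complex.exp_zero, tsum_mul_left] at this
    exact (mul_eq_right₀ hΛ.thetaSeries_I_ne_zero).mp this
  simpa only [hc1, one_mul] using hc τ x

lemma thetaSeries_eq (τ : ℍ) : thetaSeries (Λ : Set E) τ =
    (Complex.I / τ) ^ (Module.finrank ℝ E / 2 : ℂ) *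
      thetaSeries (Λ : Set E) (ModularGroup.S • τ) := by
  have := (hΛ.hasSum_gaussian_add τ 0).tsum_eq
  simp only [inner_zero_right, Complex.ofReal_zero, mul_zero, Complex.exp_zero, mul_one, zero_add,
    tsum_mul_left] at this
  exact this.symm

lemma thetaSeries_halfCharacteristic_eq (τ : ℍ) : thetaSeries (halfCharacteristic Λ) τ =
    (Complex.I / τ) ^ (Module.finrank ℝ E / 2 : ℂ) *
      thetaSeries (Λ : Set E) ((1 : ℝ) +ᵥ (ModularGroup.S • τ)) := by
  obtain ⟨u, hu⟩ := hΛ.halfCharacteristic_nonempty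
  rw [hΛ.halfCharacteristic_eq_image hu, thetaSeries_add_left_image, thetaSeries,
    ← tsum_mul_left]
  refine (hΛ.hasSum_gaussian_add τ u).tsum_eq.symm.trans (tsum_congr fun w => ?_)
  rw [gaussian_mul_exp_inner_halfCharacteristic hu _ w.2]

theorem isThetaPair (hE : Module.finrank ℝ E % 8 = 4) : IsThetaPair (Module.finrank ℝ E / 2)
    (thetaSeries (Λ : Set E)) (thetaSeries (halfCharacteristic Λ)) := by
  have hfactor (τ : ℍ) (z : ℂ) : -(τ : ℂ) ^ (Module.finrank ℝ E / 2) *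
      ((Complex.I / τ) ^ (Module.finrank ℝ E / 2 : ℂ) * z) = z := by
    rw [I_div_cpow_half hE, ← mul_assoc, neg_mul_neg,
      mul_inv_cancel₀ (pow_ne_zero _ τ.ne_zero), one_mul]
  refine ⟨?_, hΛ.thetaSeries_vadd_two, fun τ => ?_, fun τ => ?_⟩
  · rw [Nat.even_iff]
    lia
  · rw [hΛ.thetaSeries_eq τ, hfactor]
  · rw [hΛ.thetaSeries_halfCharacteristic_eq τ, hfactor]

lemma exists_thetaSeries_halfCharacteristic_ne_zero :
    ∃ τ, thetaSeries (halfCharacteristic Λ) τ ≠ 0 := by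
  refine ⟨ModularGroup.S • ((-1 : ℝ) +ᵥ I), ?_⟩
  rw [hΛ.thetaSeries_halfCharacteristic_eq, S_smul_S_smul, vadd_vadd, add_neg_cancel, zero_vadd]
  refine mul_ne_zero ?_ hΛ.thetaSeries_I_ne_zero
  rw [Complex.cpow_ne_zero_iff]
  exact .inl (div_ne_zero Complex.I_ne_zero (ne_zero _))

-- `e^{πi‖u‖²}` is the factor that `τ ↦ τ + 1` produces on the theta series of the shadow.
lemma exists_norm_sq_eq_of_mem_halfCharacteristic (hE : Module.finrank ℝ E % 8 = 4) {u : E}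
    (hu : u ∈ halfCharacteristic Λ) : ∃ m : ℕ, ‖u‖ ^ 2 = (2 * m + 1 : ℕ) := by
  obtain ⟨τ, hτ⟩ := hΛ.exists_thetaSeries_halfCharacteristic_ne_zero
  have hvadd : thetaSeries (halfCharacteristic Λ) ((1 : ℝ) +ᵥ τ) =
      Complex.exp (π * Complex.I * (‖u‖ ^ 2 : ℝ)) * thetaSeries (halfCharacteristic Λ) τ := by
    rw [thetaSeries, thetaSeries, ← tsum_mul_left]
    refine tsum_congr fun x => ?_
    rw [gaussian_vadd_one, hΛ.exp_norm_sq_eq hu x.2]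
  rw [(hΛ.isThetaPair hE).shadow_vadd_one, ← neg_one_mul, ← Complex.exp_pi_mul_I] at hvadd
  obtain ⟨m, hm⟩ := Complex.exp_eq_exp_iff_exists_int.mp (mul_right_cancel₀ hτ hvadd).symm
  have hm' : ‖u‖ ^ 2 = 2 * m + 1 := by
    have hpi : (π : ℂ) * Complex.I ≠ 0 :=
      mul_ne_zero (by exact_mod_cast Real.pi_ne_zero) Complex.I_ne_zero
    have : ((‖u‖ ^ 2 : ℝ) : ℂ) = 2 * m + 1 := mul_left_cancel₀ hpi (by linear_combination hm)
    exact_mod_cast this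
  have : 0 ≤ 2 * m + 1 := by exact_mod_cast hm' ▸ sq_nonneg ‖u‖
  lift m to ℕ using by lia
  exact ⟨m, by rw [hm']; push_cast; ring⟩

end IsSelfDual

end SelfDualTheta

section NormSeries

open UpperHalfPlane
open scoped Real

variable {n : ℕ}

lemma normOf_eq_norm_sq (x : EuclideanSpace ℝ (Fin n)) : normOf x = ‖x‖ ^ 2 :=
  real_inner_self_eq_norm_sq x

/-- The generating series of the numbers of vectors of `X` of each norm `0, 1, 2, …`, that is, its
theta series as a formal power series in `e^{πiτ}`. -/
def normSeries (X : Set (EuclideanSpace ℝ (Fin n))) : PowerSeries ℂ :=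
  .mk fun k => (numVecsOfNorm X k : ℂ)

lemma numVecsOfNorm_eq_zero {X : Set (EuclideanSpace ℝ (Fin n))} {r : ℝ}
    (hX : ∀ x ∈ X, normOf x ≠ r) : numVecsOfNorm X r = 0 := by
  have hempty : {x ∈ X | normOf x = r} = ∅ :=
    Set.eq_empty_of_forall_notMem fun x hx => hX x hx.1 hx.2
  rw [numVecsOfNorm, hempty, Set.ncard_empty]

lemma coeff_normSeries (X : Set (EuclideanSpace ℝ (Fin n))) (k : ℕ) :
    (normSeries X).coeff k = numVecsOfNorm X k := PowerSeries.coeff_mk _ _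

lemma gaussian_eq_qParam_pow {v : EuclideanSpace ℝ (Fin n)} {k : ℕ} (hv : normOf v = k) (τ : ℍ) :
    gaussian τ v = Function.Periodic.qParam 2 τ ^ k := by
  rw [normOf_eq_norm_sq] at hv
  rw [gaussian, ContinuousMap.coe_mk, Function.Periodic.qParam, ← Complex.exp_nat_mul, hv]
  congr 1
  push_cast
  ring

lemma hasNomeExpansion_thetaSeries {X : Set (EuclideanSpace ℝ (Fin n))}
    (hX : ∀ x ∈ X, ∃ k : ℕ, normOf x = k)
    (hsum : ∀ τ, Summable fun x : X => gaussian τ (x : EuclideanSpace ℝ (Fin n))) :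
    HasNomeExpansion (thetaSeries X) (normSeries X) := by
  intro τ
  choose N hN using fun x : X => hX x x.2
  have hcard (k : ℕ) : Nat.card (N ⁻¹' {k}) = numVecsOfNorm X k := by
    have himage : {x ∈ X | normOf x = k} = (↑) '' (N ⁻¹' {k}) := by
      ext x
      simp [← Nat.cast_inj (R := ℝ), ← hN, and_comm]
    rw [numVecsOfNorm, himage, Set.ncard_image_of_injective _ Subtype.val_injective]
    rfl
  refine (hsum τ).hasSum.tsum_fiberwise N |>.congr_fun fun k => ?_
  have hconst (x : N ⁻¹' {k}) : gaussian τ ((x : X) : EuclideanSpace ℝ (Fin n)) =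
      Function.Periodic.qParam 2 τ ^ k :=
    gaussian_eq_qParam_pow ((hN x).trans (congrArg _ x.2)) τ
  simp only [hconst, tsum_const, nsmul_eq_mul, coeff_normSeries, hcard]

end NormSeries

section Unimodular

variable {n : ℕ} {L : Set (EuclideanSpace ℝ (Fin n))} {Λ : Submodule ℤ (EuclideanSpace ℝ (Fin n))}

lemma IsUnimodularLattice.exists_isSelfDual (hL : IsUnimodularLattice L) :
    ∃ Λ : Submodule ℤ (EuclideanSpace ℝ (Fin n)),
      (Λ : Set (EuclideanSpace ℝ (Fin n))) = L ∧ IsSelfDual Λ := by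
  have hmem (x) : x ∈ L ↔ ∀ y ∈ L, ∃ m : ℤ, ⟪x, y⟫ = m := Set.ext_iff.mp hL x
  refine ⟨⟨⟨⟨L, fun {a b} ha hb => ?_⟩, ?_⟩, fun c x hx => ?_⟩, rfl, isSelfDual_iff.mpr hmem⟩
  · refine (hmem _).mpr fun y hy => ?_
    obtain ⟨m, hm⟩ := (hmem a).mp ha y hy
    obtain ⟨k, hk⟩ := (hmem b).mp hb y hy
    exact ⟨m + k, by rw [inner_add_left, hm, hk, Int.cast_add]⟩
  · exact (hmem 0).mpr fun y _ => ⟨0, by rw [inner_zero_left, Int.cast_zero]⟩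
  · refine (hmem _).mpr fun y hy => ?_
    obtain ⟨m, hm⟩ := (hmem x).mp hx y hy
    exact ⟨c * m, by rw [← Int.cast_smul_eq_zsmul ℝ, real_inner_smul_left, hm, Int.cast_mul]⟩

lemma IsSelfDual.sub_zsmul_mem_evenSublattice (hΛ : IsSelfDual Λ)
    {v w : EuclideanSpace ℝ (Fin n)} (hv : v ∈ Λ) (hw : w ∈ Λ) {k l : ℤ} (hk : Odd k)
    (hvk : ‖v‖ ^ 2 = k) (hwl : ‖w‖ ^ 2 = l) :
    w - (l : ℝ) • v ∈ evenSublattice (Λ : Set (EuclideanSpace ℝ (Fin n))) := by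
  obtain ⟨m, hm⟩ := hΛ.exists_int_inner_eq hw hv
  obtain ⟨i, hi⟩ : Even (l + l ^ 2 * k) := by
    simp [Int.even_add, Int.even_mul, Int.even_pow, Int.not_even_iff_odd.mpr hk]
  refine ⟨Λ.sub_mem hw (by rw [Int.cast_smul_eq_zsmul]; exact Λ.smul_mem l hv), i - l * m, ?_⟩
  have hi' : (l + l ^ 2 * k : ℝ) = i + i := by exact_mod_cast hi
  rw [normOf_eq_norm_sq, norm_sub_sq_real, norm_smul, mul_pow, Real.norm_eq_abs, sq_abs, hvk, hwl,
    real_inner_smul_right, hm]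
  push_cast
  linear_combination hi'

lemma IsSelfDual.mem_halfCharacteristic_of_mem_shadow (hΛ : IsSelfDual Λ)
    (hodd : IsOddLattice (Λ : Set (EuclideanSpace ℝ (Fin n)))) {x : EuclideanSpace ℝ (Fin n)}
    (hx : x ∈ shadow (Λ : Set (EuclideanSpace ℝ (Fin n)))) : x ∈ halfCharacteristic Λ := by
  obtain ⟨v, hv, k, hk, hvk⟩ := hodd
  rw [normOf_eq_norm_sq] at hvk
  have hxw {w} (hw : w ∈ Λ) {l : ℤ} (hl : ‖w‖ ^ 2 = l) : ∃ m : ℤ, ⟪x, w⟫ = l * ⟪x, v⟫ + m := by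
    obtain ⟨m, hm⟩ := hx.1 _ (hΛ.sub_zsmul_mem_evenSublattice hv hw hk hvk hl)
    rw [inner_sub_right, real_inner_smul_right] at hm
    exact ⟨m, by linear_combination hm⟩
  obtain ⟨j, hj⟩ : ∃ j : ℤ, ⟪x, (2 : ℝ) • v⟫ = j := by
    refine hx.1 _ ⟨by rw [two_smul]; exact Λ.add_mem hv hv, 2 * k, ?_⟩
    rw [normOf_eq_norm_sq, norm_smul, mul_pow, Real.norm_two, hvk]
    push_cast
    ring
  rw [real_inner_smul_right] at hj
  obtain ⟨i, rfl | rfl⟩ := j.even_or_odd'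
  · refine absurd (hΛ.mem_iff.mpr fun w hw => ?_) hx.2
    obtain ⟨l, hl⟩ := hΛ.exists_nat_norm_sq_eq hw
    obtain ⟨m, hm⟩ := hxw hw (l := l) (by exact_mod_cast hl)
    refine ⟨l * i + m, ?_⟩
    rw [hm]
    push_cast at hj ⊢
    linear_combination (l / 2 : ℝ) * hj
  · intro w hw
    obtain ⟨l, hl⟩ := hΛ.exists_nat_norm_sq_eq hw
    obtain ⟨m, hm⟩ := hxw hw (l := l) (by exact_mod_cast hl)
    refine ⟨l * i + m, ?_⟩
    rw [real_inner_comm, hm, hl]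
    push_cast at hj ⊢
    linear_combination (l / 2 : ℝ) * hj

lemma IsSelfDual.shadow_eq (hΛ : IsSelfDual Λ)
    (hodd : IsOddLattice (Λ : Set (EuclideanSpace ℝ (Fin n)))) :
    shadow (Λ : Set (EuclideanSpace ℝ (Fin n))) = halfCharacteristic Λ := by
  refine Set.Subset.antisymm (fun x => hΛ.mem_halfCharacteristic_of_mem_shadow hodd)
    fun x hx => ⟨fun w ⟨hw, i, hi⟩ => ?_, fun hxΛ => ?_⟩
  · obtain ⟨m, hm⟩ := hx w hw
    rw [normOf_eq_norm_sq] at hi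
    exact ⟨i + m, by rw [real_inner_comm, hm, hi]; push_cast; ring⟩
  · obtain ⟨v, hv, k, ⟨i, rfl⟩, hvk⟩ := hodd
    obtain ⟨m, hm⟩ := hx v hv
    obtain ⟨j, hj⟩ := hΛ.exists_int_inner_eq hv hxΛ
    rw [normOf_eq_norm_sq] at hvk
    have : 2 * j = 2 * i + 1 + 2 * m := by
      rify
      push_cast at hvk
      linear_combination -2 * hj + 2 * hm + hvk
    lia

lemma IsSelfDual.hasNomeExpansion_thetaSeries (hΛ : IsSelfDual Λ) :
    HasNomeExpansion (thetaSeries (Λ : Set (EuclideanSpace ℝ (Fin n))))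
      (normSeries (Λ : Set (EuclideanSpace ℝ (Fin n)))) :=
  _root_.hasNomeExpansion_thetaSeries
    (fun x hx => by simpa only [normOf_eq_norm_sq] using hΛ.exists_nat_norm_sq_eq hx)
    hΛ.summable_gaussian

lemma IsSelfDual.hasNomeExpansion_thetaSeries_halfCharacteristic (hΛ : IsSelfDual Λ)
    (hn : n % 8 = 4) :
    HasNomeExpansion (thetaSeries (halfCharacteristic Λ)) (normSeries (halfCharacteristic Λ)) := by
  refine _root_.hasNomeExpansion_thetaSeries (fun x hx => ?_)
    hΛ.summable_gaussian_halfCharacteristic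
  obtain ⟨m, hm⟩ := hΛ.exists_norm_sq_eq_of_mem_halfCharacteristic (by simpa using hn) hx
  exact ⟨_, (normOf_eq_norm_sq x).trans hm⟩

lemma numVecsOfNorm_zero (Λ : Submodule ℤ (EuclideanSpace ℝ (Fin n))) :
    numVecsOfNorm (Λ : Set (EuclideanSpace ℝ (Fin n))) 0 = 1 := by
  rw [numVecsOfNorm, Set.ncard_eq_one]
  refine ⟨0, Set.ext fun x => ?_⟩
  simp only [normOf_eq_norm_sq]
  simp +contextual

lemma numVecsOfNorm_eq_zero_of_lt {r s : ℝ} (hL : ∀ x ∈ L, x ≠ 0 → r ≤ normOf x) (hs : 0 < s)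
    (hsr : s < r) : numVecsOfNorm L s = 0 := by
  refine numVecsOfNorm_eq_zero fun x hx hxs => ?_
  have h0 : x ≠ 0 := by
    rintro rfl
    rw [normOf, inner_zero_left] at hxs
    exact hs.ne hxs
  exact ((hL x hx h0).trans_eq hxs).not_gt hsr

end Unimodular

section IntegerLattice

/-- The lattice `ℤⁿ`. -/
def integerLattice (n : ℕ) : Submodule ℤ (EuclideanSpace ℝ (Fin n)) where
  carrier := {x | ∀ i, ∃ m : ℤ, x i = m}
  add_mem' {x y} hx hy i := by
    obtain ⟨m, hm⟩ := hx i
    obtain ⟨k, hk⟩ := hy i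
    exact ⟨m + k, by rw [PiLp.add_apply, hm, hk, Int.cast_add]⟩
  zero_mem' _ := ⟨0, by rw [PiLp.zero_apply, Int.cast_zero]⟩
  smul_mem' c x hx i := by
    obtain ⟨m, hm⟩ := hx i
    exact ⟨c * m, by rw [PiLp.smul_apply, hm, zsmul_eq_mul, Int.cast_mul]⟩

lemma mem_integerLattice {n : ℕ} {x : EuclideanSpace ℝ (Fin n)} :
    x ∈ integerLattice n ↔ ∀ i, ∃ m : ℤ, x i = m := Iff.rfl

lemma isSelfDual_integerLattice (n : ℕ) : IsSelfDual (integerLattice n) := by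
  refine isSelfDual_iff.mpr fun x => ⟨fun hx y hy => ?_, fun hx i => ?_⟩
  · choose a ha using mem_integerLattice.mp hx
    choose b hb using mem_integerLattice.mp hy
    refine ⟨∑ i, b i * a i, ?_⟩
    simp [PiLp.inner_apply, ha, hb]
  · obtain ⟨m, hm⟩ := hx (EuclideanSpace.single i 1)
      fun j => ⟨if j = i then 1 else 0, by simp⟩
    exact ⟨m, by simpa [EuclideanSpace.inner_single_right] using hm⟩

-- This holds because `m² ≡ m` modulo `2`.
lemma halves_mem_halfCharacteristic_integerLattice (n : ℕ) :
    (WithLp.toLp 2 fun _ => 1 / 2) ∈ halfCharacteristic (integerLattice n) := by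
  intro w hw
  choose a ha using mem_integerLattice.mp hw
  choose b hb using fun i => Int.even_mul_pred_self (a i)
  refine ⟨-∑ i, b i, ?_⟩
  have hb' (i) : (a i * (a i - 1) : ℝ) = b i + b i := by exact_mod_cast hb i
  simp only [PiLp.inner_apply, EuclideanSpace.norm_sq_eq, ha, Real.norm_eq_abs, sq_abs,
    Finset.sum_div, Int.cast_neg, Int.cast_sum, ← sub_eq_add_neg, ← Finset.sum_sub_distrib,
    RCLike.inner_apply, conj_trivial]
  refine Finset.sum_congr rfl fun i _ => ?_
  linear_combination - hb' i / 2

lemma mem_halfCharacteristic_integerLattice {n : ℕ} {x : EuclideanSpace ℝ (Fin n)} :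
    x ∈ halfCharacteristic (integerLattice n) ↔ ∀ i, ∃ m : ℤ, x i = m + 1 / 2 := by
  rw [(isSelfDual_integerLattice n).mem_halfCharacteristic_iff_sub_mem
    (halves_mem_halfCharacteristic_integerLattice n), mem_integerLattice]
  simp only [PiLp.sub_apply, sub_eq_iff_eq_add]

lemma numVecsOfNorm_eq_card_piFinset {n : ℕ} {X : Set (EuclideanSpace ℝ (Fin n))} {a b k : ℕ}
    (ha : a ≤ 1) (hX : ∀ x, x ∈ X ↔ ∀ i, ∃ m : ℤ, x i = m + a / 2) (hk : 4 * k < (2 * b + 1) ^ 2) :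
    numVecsOfNorm X k = ((Fintype.piFinset fun _ : Fin n => Finset.Icc (-b : ℤ) b).filter
      fun m : Fin n → ℤ => ∑ i, (2 * m i + a) ^ 2 = 4 * (k : ℤ)).card := by
  let f (m : Fin n → ℤ) : EuclideanSpace ℝ (Fin n) := WithLp.toLp 2 fun i => m i + a / 2
  have hf : f.Injective := fun m m' h => funext fun i => by
    simpa [f] using congrArg (fun x : EuclideanSpace ℝ (Fin n) => x i) h
  have hnorm (m) : normOf (f m) = k ↔ ∑ i, (2 * m i + a) ^ 2 = 4 * (k : ℤ) := by
    rw [normOf_eq_norm_sq, EuclideanSpace.norm_sq_eq, ← mul_right_inj' (four_ne_zero (α := ℝ)),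
      Finset.mul_sum, ← Int.cast_inj (α := ℝ)]
    push_cast
    refine Eq.congr_left (Finset.sum_congr rfl fun i _ => ?_)
    rw [Real.norm_eq_abs, sq_abs]
    ring
  have hbox {m : Fin n → ℤ} (hm : ∑ i, (2 * m i + a) ^ 2 = 4 * (k : ℤ)) (i) :
      m i ∈ Finset.Icc (-b : ℤ) b := by
    have hle : (2 * m i + a) ^ 2 ≤ 4 * (k : ℤ) :=
      hm ▸ Finset.single_le_sum (f := fun i => (2 * m i + a) ^ 2) (fun _ _ => sq_nonneg _)
        (Finset.mem_univ i)
    have := abs_lt_of_sq_lt_sq' (b := (2 * b + 1 : ℤ))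
      (hle.trans_lt (by exact_mod_cast hk)) (by positivity)
    rw [Finset.mem_Icc]
    lia
  rw [numVecsOfNorm, ← Set.ncard_coe_finset, ← Set.ncard_image_of_injective _ hf]
  congr 1
  ext x
  simp only [Set.mem_ofPred_eq, Set.mem_image, Finset.mem_coe, Finset.mem_filter,
    Fintype.mem_piFinset, hX]
  refine ⟨fun ⟨hx, hxk⟩ => ?_, ?_⟩
  · choose m hm using hx
    obtain rfl : f m = x := PiLp.ext fun i => (hm i).symm
    have := (hnorm m).mp hxk
    exact ⟨m, ⟨hbox this, this⟩, rfl⟩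
  · rintro ⟨m, ⟨-, hm⟩, rfl⟩
    exact ⟨fun i => ⟨m i, rfl⟩, (hnorm m).mpr hm⟩

lemma numVecsOfNorm_integerLattice_four (k : Fin 5) :
    numVecsOfNorm (integerLattice 4 : Set (EuclideanSpace ℝ (Fin 4))) (k : ℕ) =
      ![1, 8, 24, 32, 24] k := by
  rw [numVecsOfNorm_eq_card_piFinset (a := 0) (b := 2) zero_le_one
    (by simp [mem_integerLattice]) (by lia)]
  revert k
  decide +kernel

lemma numVecsOfNorm_halfCharacteristic_integerLattice_four (k : Fin 5) :
    numVecsOfNorm (halfCharacteristic (integerLattice 4)) (k : ℕ) = ![0, 16, 0, 64, 0] k := by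
  rw [numVecsOfNorm_eq_card_piFinset (a := 1) (b := 2) le_rfl
    (by simp [mem_halfCharacteristic_integerLattice]) (by lia)]
  revert k
  decide +kernel

end IntegerLattice

section DimensionThirtySix

open UpperHalfPlane PowerSeries

local notation "ϑ" => normSeries (integerLattice 4 : Set (EuclideanSpace ℝ (Fin 4)))

local notation "ς" => normSeries (halfCharacteristic (integerLattice 4))

lemma coeff_normSeries_integerLattice_four :
    coeff 0 ϑ = 1 ∧ coeff 1 ϑ = 8 ∧ coeff 2 ϑ = 24 ∧ coeff 3 ϑ = 32 ∧ coeff 4 ϑ = 24 := by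
  have h (k : Fin 5) := (coeff_normSeries _ _).trans
    (congrArg Nat.cast (numVecsOfNorm_integerLattice_four k))
  simpa [Fin.forall_fin_succ] using h

lemma coeff_normSeries_halfCharacteristic_integerLattice_four :
    coeff 0 ς = 0 ∧ coeff 1 ς = 16 ∧ coeff 2 ς = 0 ∧ coeff 3 ς = 64 ∧ coeff 4 ς = 0 := by
  have h (k : Fin 5) := (coeff_normSeries _ _).trans
    (congrArg Nat.cast (numVecsOfNorm_halfCharacteristic_integerLattice_four k))
  simpa [Fin.forall_fin_succ] using h

lemma coeff_sq_normSeries_integerLattice_four : letI p := ϑ * (rescale (-1) ϑ - ς)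
    coeff 0 p = 1 ∧ coeff 1 p = -16 ∧ coeff 2 p = -144 ∧ coeff 3 p = -448 ∧ coeff 4 p = -912 := by
  obtain ⟨h0, h1, h2, h3, h4⟩ := coeff_normSeries_integerLattice_four
  obtain ⟨h0', h1', h2', h3', h4'⟩ := coeff_normSeries_halfCharacteristic_integerLattice_four
  simp only [coeff_mul, Finset.Nat.sum_antidiagonal_eq_sum_range_succ_mk, Finset.sum_range_succ,
    Finset.sum_range_zero, map_sub, coeff_rescale, Nat.reduceSub, h0, h1, h2, h3, h4,
    h0', h1', h2', h3', h4']
  norm_num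

lemma coeff_sq_normSeries_halfCharacteristic_integerLattice_four :
    letI p := -(ς * (ϑ + rescale (-1) ϑ))
    coeff 0 p = 0 ∧ coeff 1 p = -32 ∧ coeff 2 p = 0 ∧ coeff 3 p = -896 ∧ coeff 4 p = 0 := by
  obtain ⟨h0, h1, h2, h3, h4⟩ := coeff_normSeries_integerLattice_four
  obtain ⟨h0', h1', h2', h3', h4'⟩ := coeff_normSeries_halfCharacteristic_integerLattice_four
  simp only [coeff_mul, Finset.Nat.sum_antidiagonal_eq_sum_range_succ_mk, Finset.sum_range_succ,
    Finset.sum_range_zero, map_add, map_neg, coeff_rescale, Nat.reduceSub, h0, h1,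
    h2, h3, h4, h0', h1', h2', h3', h4']
  norm_num

lemma isThetaPair_integerLattice_four : IsThetaPair 2
    (thetaSeries (integerLattice 4 : Set (EuclideanSpace ℝ (Fin 4))))
    (thetaSeries (halfCharacteristic (integerLattice 4))) := by
  simpa using (isSelfDual_integerLattice 4).isThetaPair (by simp)

lemma hasNomeExpansion_thetaSeries_integerLattice_four :
    HasNomeExpansion (thetaSeries (integerLattice 4 : Set (EuclideanSpace ℝ (Fin 4)))) ϑ :=
  (isSelfDual_integerLattice 4).hasNomeExpansion_thetaSeries

lemma hasNomeExpansion_thetaSeries_halfCharacteristic_integerLattice_four :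
    HasNomeExpansion (thetaSeries (halfCharacteristic (integerLattice 4))) ς :=
  (isSelfDual_integerLattice 4).hasNomeExpansion_thetaSeries_halfCharacteristic rfl

variable {θ σ : ℍ → ℂ} {p r : PowerSeries ℂ}

lemma IsThetaPair.coeff_relation_weight_twenty (h : IsThetaPair 18 θ σ)
    (hθ : HasNomeExpansion θ p) (hσ : HasNomeExpansion σ r) :
    coeff 4 p + 8 * coeff 3 p + 8 * coeff 3 r =
      50520 * coeff 0 p + 3616 * coeff 1 p + 432 * coeff 2 p + 3616 * coeff 1 r := by
  obtain ⟨G, hG⟩ := h.exists_modularForm_mul isThetaPair_integerLattice_four hθ hσ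
    hasNomeExpansion_thetaSeries_integerLattice_four
    hasNomeExpansion_thetaSeries_halfCharacteristic_integerLattice_four
  obtain ⟨h0, h1, h2, h3, h4⟩ := coeff_normSeries_integerLattice_four
  obtain ⟨h0', h1', h2', h3', h4'⟩ := coeff_normSeries_halfCharacteristic_integerLattice_four
  have hcoeff := qExpansion_coeff_two_weight_twenty G
  simp only [hG, coeff_mul, Finset.Nat.sum_antidiagonal_eq_sum_range_succ_mk,
    Finset.sum_range_succ, Finset.sum_range_zero, Nat.reduceMul, Nat.reduceSub,
    h0, h1, h2, h3, h4, h0', h1', h2', h3', h4'] at hcoeff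
  linear_combination hcoeff / 2

lemma IsThetaPair.coeff_relation_weight_twentyTwo (h : IsThetaPair 18 θ σ)
    (hθ : HasNomeExpansion θ p) (hσ : HasNomeExpansion σ r) :
    coeff 4 p - 16 * coeff 3 p - 16 * coeff 3 r =
      27480 * coeff 0 p + 5056 * coeff 1 p - 144 * coeff 2 p + 5056 * coeff 1 r := by
  have hϑ := hasNomeExpansion_thetaSeries_integerLattice_four
  have hς := hasNomeExpansion_thetaSeries_halfCharacteristic_integerLattice_four
  obtain ⟨G, hG⟩ := h.exists_modularForm_mul isThetaPair_integerLattice_four.sq hθ hσ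
    (hϑ.mul (hϑ.comp_vadd_one.sub hς)) (hς.mul (hϑ.add hϑ.comp_vadd_one)).neg
  obtain ⟨h0, h1, h2, h3, h4⟩ := coeff_sq_normSeries_integerLattice_four
  obtain ⟨h0', h1', h2', h3', h4'⟩ := coeff_sq_normSeries_halfCharacteristic_integerLattice_four
  have hcoeff := qExpansion_coeff_two_weight_twentyTwo G
  simp only [hG, coeff_mul _ p, coeff_mul _ r, Finset.Nat.sum_antidiagonal_eq_sum_range_succ_mk,
    Finset.sum_range_succ, Finset.sum_range_zero, Nat.reduceMul, Nat.reduceSub,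
    h0, h1, h2, h3, h4, h0', h1', h2', h3', h4'] at hcoeff
  linear_combination hcoeff / 2

end DimensionThirtySix

theorem theta_series_dim36 {L : Set (EuclideanSpace ℝ (Fin 36))}
    (huni : IsUnimodularLattice L) (hodd : IsOddLattice L)
    (hmin : ∀ x ∈ L, x ≠ 0 → 3 ≤ normOf x) :
    ∃ α β : ℕ,
      (numVecsOfNorm L 3 : ℤ) = 960 - (α : ℤ) ∧
      (numVecsOfNorm L 4 : ℤ) = 42840 + 4096 * (β : ℤ) ∧
      numVecsOfNorm (shadow L) 1 = β ∧
      (numVecsOfNorm (shadow L) 3 : ℤ) = (α : ℤ) - 60 * (β : ℤ) := by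
  obtain ⟨Λ, rfl, hΛ⟩ := huni.exists_isSelfDual
  rw [hΛ.shadow_eq hodd]
  have hpair : IsThetaPair 18 (thetaSeries (Λ : Set (EuclideanSpace ℝ (Fin 36))))
      (thetaSeries (halfCharacteristic Λ)) := by
    simpa using hΛ.isThetaPair (by simp)
  have hθ := hΛ.hasNomeExpansion_thetaSeries
  have hσ := hΛ.hasNomeExpansion_thetaSeries_halfCharacteristic rfl
  have h20 := hpair.coeff_relation_weight_twenty hθ hσ
  have h22 := hpair.coeff_relation_weight_twentyTwo hθ hσ
  simp only [coeff_normSeries, Nat.cast_zero, Nat.cast_one, Nat.cast_ofNat, numVecsOfNorm_zero,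
    numVecsOfNorm_eq_zero_of_lt hmin one_pos (by norm_num),
    numVecsOfNorm_eq_zero_of_lt hmin two_pos (by norm_num)] at h20 h22
  set S := halfCharacteristic Λ
  refine ⟨numVecsOfNorm S 3 + 60 * numVecsOfNorm S 1, numVecsOfNorm S 1, ?_, ?_, rfl, by simp⟩ <;>
    rify <;> apply Complex.ofReal_injective <;> push_cast
  · linear_combination (h20 - h22) / 24
  · linear_combination (2 * h20 + h22) / 3
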